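/- The Galois group over ℚ of (the splitting field of) the polynomial Z⁴ − (14/19)Z³ + (34/19)Z² − (14/19)Z + 1 ∈ ℚ[Z] is isomorphic to the dihedral group D₄ of order 8. -/

import Mathlib

open Polynomial

/-!
The polynomial is `Z⁴ - aZ³ + bZ² - aZ + 1` with `a = 14/19`, `b = 34/19`, so its roots are
`x, x⁻¹, y, y⁻¹`, and the traces `x + x⁻¹`, `y + y⁻¹` are the roots of `W² - aW + (b - 2)`.
The Galois group acts on the square with consecutive vertices `x, y, x⁻¹, y⁻¹`, hence embeds
in `D₄`. Put `δ = (x + x⁻¹) - (y + y⁻¹)` and `ε = (x - x⁻¹)(y - y⁻¹)`. Then `δ² = a² - 4(b - 2)` and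
`ε² = (b + 2)² - 4a²` are rational, and if neither they nor their product are squares, then every
choice of signs for `δ` and `ε` is realised by an automorphism. Negating both gives a quarter turn
of the square; fixing `δ` and negating `ε` gives a reflection through a diagonal. Here `δ²` and
`ε²` are `5` and `11` up to rational squares.
-/

section Dihedral

variable {G : Type*} [Group G] {n : ℕ} {ρ τ : G}

/-- The exponential `i ↦ ρ ^ i`, with exponents modulo `n`, of an element `ρ` killed by `n`. It is
valued in `Additive G` because `ZMod.lift` is additive. -/
def zmodPowersHom (hρ : ρ ^ n = 1) : ZMod n →+ Additive G :=
  ZMod.lift n ⟨zmultiplesHom (Additive G) (.ofMul ρ), by simp [← ofMul_pow, hρ]⟩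

theorem zmodPowersHom_intCast (hρ : ρ ^ n = 1) (k : ℤ) :
    zmodPowersHom hρ (k : ZMod n) = .ofMul (ρ ^ k) := by
  simp [zmodPowersHom]

/-- The homomorphism out of `DihedralGroup n` given by its presentation
`⟨ρ, τ | ρⁿ = τ² = 1, τρ⁻¹ = ρτ⟩`; it sends `r i` to `ρ ^ i` and `sr i` to `τ * ρ ^ i`. -/
def dihedralLift (hρ : ρ ^ n = 1) (hτ : τ * τ = 1) (hτρ : SemiconjBy τ ρ⁻¹ ρ) :
    DihedralGroup n →* G where
  toFun
    | .r i => (zmodPowersHom hρ i).toMul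
    | .sr i => τ * (zmodPowersHom hρ i).toMul
  map_one' := congrArg Additive.toMul (map_zero (zmodPowersHom hρ))
  map_mul' := by
    have hswap (k : ℤ) : ρ ^ k * τ = τ * ρ ^ (-k) := by
      simpa only [inv_zpow'] using (hτρ.zpow_right k).eq.symm
    rintro (i | i) (j | j) <;> obtain ⟨k, rfl⟩ := ZMod.intCast_surjective i <;>
      obtain ⟨l, rfl⟩ := ZMod.intCast_surjective j <;>
      simp only [DihedralGroup.r_mul_r, DihedralGroup.r_mul_sr, DihedralGroup.sr_mul_r,
        DihedralGroup.sr_mul_sr, ← Int.cast_add, ← Int.cast_sub, zmodPowersHom_intCast, toMul_ofMul]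
    · exact zpow_add ρ k l
    · rw [← mul_assoc, hswap, mul_assoc, ← zpow_add, neg_add_eq_sub]
    · rw [mul_assoc, ← zpow_add]
    · rw [mul_assoc, ← mul_assoc (ρ ^ k), hswap, mul_assoc, ← mul_assoc τ, hτ, one_mul, ← zpow_add,
        neg_add_eq_sub]

theorem dihedralLift_r_intCast (hρ : ρ ^ n = 1) (hτ : τ * τ = 1) (hτρ : SemiconjBy τ ρ⁻¹ ρ)
    (k : ℤ) : dihedralLift hρ hτ hτρ (.r k) = ρ ^ k :=
  congrArg Additive.toMul (zmodPowersHom_intCast hρ k)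

theorem dihedralLift_sr_intCast (hρ : ρ ^ n = 1) (hτ : τ * τ = 1) (hτρ : SemiconjBy τ ρ⁻¹ ρ)
    (k : ℤ) : dihedralLift hρ hτ hτρ (.sr k) = τ * ρ ^ k :=
  congrArg (τ * Additive.toMul ·) (zmodPowersHom_intCast hρ k)

theorem nonempty_mulEquiv_dihedralGroup (hρ : orderOf ρ = n) (hτ : τ * τ = 1)
    (hτρ : SemiconjBy τ ρ⁻¹ ρ) (hτ_notMem : τ ∉ Subgroup.zpowers ρ)
    (hcover : ∀ g, ∃ k : ℤ, ρ ^ k * g = 1 ∨ ρ ^ k * g = τ) :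
    Nonempty (G ≃* DihedralGroup n) := by
  have hρn : ρ ^ n = 1 := hρ ▸ pow_orderOf_eq_one ρ
  refine ⟨(MulEquiv.ofBijective (dihedralLift hρn hτ hτρ) ⟨?_, fun g ↦ ?_⟩).symm⟩
  · rw [injective_iff_map_eq_one]
    rintro (i | i) hi <;> obtain ⟨k, rfl⟩ := ZMod.intCast_surjective i
    · rw [dihedralLift_r_intCast, ← orderOf_dvd_iff_zpow_eq_one, hρ] at hi
      rw [(ZMod.intCast_zmod_eq_zero_iff_dvd k n).mpr hi, DihedralGroup.r_zero]
    · rw [dihedralLift_sr_intCast, mul_eq_one_iff_eq_inv, ← zpow_neg] at hi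
      exact absurd ⟨-k, hi.symm⟩ hτ_notMem
  · obtain ⟨k, hk | hk⟩ := hcover g
    · refine ⟨.r (-k : ℤ), ?_⟩
      rw [dihedralLift_r_intCast, zpow_neg, inv_eq_of_mul_eq_one_right hk]
    · refine ⟨.sr k, mul_left_cancel (a := ρ ^ k) ?_⟩
      rw [dihedralLift_sr_intCast, hk, ← mul_assoc, ← (hτρ.zpow_right k).eq, inv_zpow,
        inv_mul_cancel_right]

end Dihedral

section SquareRoots

variable {F K : Type*} [Field F] [Field K] [Algebra F K] {m n : F} {x y : K}

theorem algEquiv_apply_eq_or_eq_neg (σ : K ≃ₐ[F] K) (hx : x ^ 2 = algebraMap F K n) :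
    σ x = x ∨ σ x = -x := by
  rw [← sq_eq_sq_iff_eq_or_eq_neg, ← map_pow, hx, σ.commutes]

theorem ne_zero_of_not_isSquare {M : Type*} [MulZeroClass M] {n : M} (hn : ¬IsSquare n) : n ≠ 0 :=
  fun hn0 ↦ hn (hn0 ▸ .zero)

theorem ne_zero_of_sq_eq_algebraMap (hn : n ≠ 0) (hx : x ^ 2 = algebraMap F K n) : x ≠ 0 := by
  rintro rfl
  exact hn (by simpa using hx.symm)

theorem minpoly_eq_X_sq_sub_C (hn : ¬IsSquare n) (hx : x ^ 2 = algebraMap F K n) :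
    minpoly F x = X ^ 2 - C n := by
  have hirr : Irreducible (X ^ 2 - C n) :=
    (X_pow_sub_C_irreducible_iff_of_prime Nat.prime_two).mpr fun r hr ↦ hn ⟨r, by rw [← hr, sq]⟩
  exact (minpoly.eq_of_irreducible_of_monic hirr (by simp [hx])
    (monic_X_pow_sub_C n two_ne_zero)).symm

variable [Normal F K]

theorem exists_algEquiv_apply_eq_neg (hn : ¬IsSquare n) (hx : x ^ 2 = algebraMap F K n) :
    ∃ σ : K ≃ₐ[F] K, σ x = -x :=
  minpoly.exists_algEquiv_of_root' (Algebra.IsAlgebraic.isAlgebraic x) <| by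
    simp [minpoly_eq_X_sq_sub_C hn hx, hx]

theorem exists_algEquiv_apply_eq_self_and_eq_neg (hm : ¬IsSquare m) (hnm : ¬IsSquare (n * m))
    (hx : x ^ 2 = algebraMap F K n) (hy : y ^ 2 = algebraMap F K m) :
    ∃ σ : K ≃ₐ[F] K, σ x = x ∧ σ y = -y := by
  have hxy : (x * y) ^ 2 = algebraMap F K (n * m) := by rw [mul_pow, hx, hy, map_mul]
  have hx0 : x ≠ 0 :=
    left_ne_zero_of_mul (ne_zero_of_sq_eq_algebraMap (ne_zero_of_not_isSquare hnm) hxy)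
  obtain ⟨φ, hφ⟩ := exists_algEquiv_apply_eq_neg hm hy
  obtain ⟨ψ, hψ⟩ := exists_algEquiv_apply_eq_neg hnm hxy
  rw [map_mul] at hψ
  obtain hψx | hψx := algEquiv_apply_eq_or_eq_neg ψ hx
  · rw [hψx, ← mul_neg] at hψ
    exact ⟨ψ, hψx, mul_left_cancel₀ hx0 hψ⟩
  obtain hφx | hφx := algEquiv_apply_eq_or_eq_neg φ hx
  · exact ⟨φ, hφx, hφ⟩
  rw [hψx, neg_mul, neg_inj] at hψ
  have hψy : ψ y = y := mul_left_cancel₀ hx0 hψ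
  exact ⟨ψ * φ, by simp [hφx, hψx], by simp [hφ, hψy]⟩

theorem exists_algEquiv_apply_eq_neg_and_eq_neg (hn : ¬IsSquare n) (hm : ¬IsSquare m)
    (hnm : ¬IsSquare (n * m)) (hx : x ^ 2 = algebraMap F K n) (hy : y ^ 2 = algebraMap F K m) :
    ∃ σ : K ≃ₐ[F] K, σ x = -x ∧ σ y = -y := by
  obtain ⟨φ, hφx, hφy⟩ := exists_algEquiv_apply_eq_self_and_eq_neg hm hnm hx hy
  obtain ⟨ψ, hψy, hψx⟩ := exists_algEquiv_apply_eq_self_and_eq_neg hn (mul_comm n m ▸ hnm) hy hx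
  exact ⟨φ * ψ, by simp [hψx, hφx], by simp [hψy, hφy]⟩

end SquareRoots

section AddInv

variable {K : Type*} [Field K] {x y v : K}

theorem add_inv_eq_add_inv_iff (hx : x ≠ 0) (hy : y ≠ 0) :
    x + x⁻¹ = y + y⁻¹ ↔ x = y ∨ x = y⁻¹ := by
  have hfactor : x * (x + x⁻¹ - (y + y⁻¹)) = (x - y) * (x - y⁻¹) := by field_simp; ring
  rw [← sub_eq_zero, ← mul_right_inj' hx, hfactor, mul_zero, mul_eq_zero, sub_eq_zero, sub_eq_zero]

theorem exists_add_inv_eq_of_splits (hsplits : (X ^ 2 - C v * X + 1).Splits) :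
    ∃ y : K, y ≠ 0 ∧ y + y⁻¹ = v := by
  have hdegree : (X ^ 2 - C v * X + 1).degree = 2 := by compute_degree!
  obtain ⟨y, hy⟩ := hsplits.exists_eval_eq_zero (hdegree ▸ two_ne_zero)
  replace hy : y ^ 2 - v * y + 1 = 0 := by simpa using hy
  have hy0 : y ≠ 0 := by rintro rfl; simp at hy
  exact ⟨y, hy0, by field_simp; linear_combination hy⟩

end AddInv

section PalindromicQuartic

section CommRing

variable {R S : Type*} [CommRing R] [CommRing S]

/-- The monic self-reciprocal quartic; `a` carries the sign that makes it the sum of the roots. -/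
noncomputable def palindromicQuartic (a b : R) : R[X] :=
  X ^ 4 - C a * X ^ 3 + C b * X ^ 2 - C a * X + 1

theorem degree_palindromicQuartic [Nontrivial R] (a b : R) :
    (palindromicQuartic a b).degree = 4 := by
  unfold palindromicQuartic; compute_degree!

theorem map_palindromicQuartic (f : R →+* S) (a b : R) :
    (palindromicQuartic a b).map f = palindromicQuartic (f a) (f b) := by
  simp [palindromicQuartic]

theorem palindromicQuartic_eq_mul (w v : R) :
    palindromicQuartic (w + v) (w * v + 2) = (X ^ 2 - C w * X + 1) * (X ^ 2 - C v * X + 1) := by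
  simp only [palindromicQuartic, map_add, map_mul, map_ofNat]
  ring

end CommRing

variable {F K : Type*} [Field F] [Field K] [Algebra F K] {a b : F} {x y : K}

/-- `x, x⁻¹, y, y⁻¹` are the roots of `palindromicQuartic a b`, with multiplicity. This is encoded
by Vieta's formulas for the traces `x + x⁻¹` and `y + y⁻¹`, the roots of `W² - aW + (b - 2)`. -/
structure IsReciprocalRootPair (a b : F) (x y : K) : Prop where
  left_ne_zero : x ≠ 0
  right_ne_zero : y ≠ 0
  add_eq : (x + x⁻¹) + (y + y⁻¹) = algebraMap F K a
  mul_eq : (x + x⁻¹) * (y + y⁻¹) + 2 = algebraMap F K b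

theorem exists_isReciprocalRootPair
    (hsplits : ((palindromicQuartic a b).map (algebraMap F K)).Splits) :
    ∃ x y : K, IsReciprocalRootPair a b x y := by
  rw [map_palindromicQuartic] at hsplits
  set α := algebraMap F K a
  set β := algebraMap F K b
  have hdegree : (palindromicQuartic α β).degree = 4 := degree_palindromicQuartic α β
  obtain ⟨x, hx⟩ := hsplits.exists_eval_eq_zero (hdegree ▸ four_ne_zero)
  replace hx : x ^ 4 - α * x ^ 3 + β * x ^ 2 - α * x + 1 = 0 := by
    simpa [palindromicQuartic] using hx
  have hx0 : x ≠ 0 := by rintro rfl; simp at hx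
  obtain ⟨v, hadd⟩ : ∃ v, (x + x⁻¹) + v = α := ⟨α - (x + x⁻¹), by ring⟩
  have hmul : (x + x⁻¹) * v + 2 = β := by
    rw [eq_sub_of_add_eq' hadd]; field_simp; linear_combination -hx
  have hdvd : X ^ 2 - C v * X + 1 ∣ palindromicQuartic α β := by
    rw [← hadd, ← hmul, palindromicQuartic_eq_mul]
    exact dvd_mul_left _ _
  have hne : palindromicQuartic α β ≠ 0 := ne_zero_of_degree_gt (n := 0) (by simp [hdegree])
  obtain ⟨y, hy0, rfl⟩ := exists_add_inv_eq_of_splits (hsplits.of_dvd hne hdvd)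
  exact ⟨x, y, hx0, hy0, hadd, hmul⟩

variable (K) in
theorem two_ne_zero_of_not_isSquare_sq_sub_four_mul {c d : F} (h : ¬IsSquare (c ^ 2 - 4 * d)) :
    (2 : K) ≠ 0 := by
  rw [← map_ofNat (algebraMap F K) 2, _root_.map_ne_zero]
  exact fun h2 ↦ h ⟨c, by linear_combination -2 * d * h2⟩

/-- The difference `δ` of the traces of `{x, x⁻¹}` and `{y, y⁻¹}`: its sign records whether an
automorphism preserves or exchanges these two pairs. -/
def traceDiff (x y : K) : K :=
  (x + x⁻¹) - (y + y⁻¹)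

/-- The product `ε` of the differences inside `{x, x⁻¹}` and `{y, y⁻¹}`, each of which changes sign
under inversion. -/
def subInvProd (x y : K) : K :=
  (x - x⁻¹) * (y - y⁻¹)

namespace IsReciprocalRootPair

theorem aeval_palindromicQuartic (h : IsReciprocalRootPair a b x y) (z : K) :
    aeval z (palindromicQuartic a b) = (z - x) * (z - x⁻¹) * ((z - y) * (z - y⁻¹)) := by
  have hx := h.left_ne_zero
  have hy := h.right_ne_zero
  rw [← eval_map_algebraMap, map_palindromicQuartic, ← h.add_eq, ← h.mul_eq,
    palindromicQuartic_eq_mul]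
  simp only [eval_mul, eval_add, eval_sub, eval_pow, eval_X, eval_C, eval_one]
  field_simp
  ring

theorem aeval_palindromicQuartic_eq_zero_iff (h : IsReciprocalRootPair a b x y) {z : K} :
    aeval z (palindromicQuartic a b) = 0 ↔ (z = x ∨ z = x⁻¹) ∨ z = y ∨ z = y⁻¹ := by
  simp only [h.aeval_palindromicQuartic, mul_eq_zero, sub_eq_zero]

theorem sq_traceDiff (h : IsReciprocalRootPair a b x y) :
    traceDiff x y ^ 2 = algebraMap F K (a ^ 2 - 4 * (b - 2)) := by
  simp only [traceDiff, map_sub, map_mul, map_pow, map_ofNat, ← h.add_eq, ← h.mul_eq]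
  ring

theorem sq_subInvProd (h : IsReciprocalRootPair a b x y) :
    subInvProd x y ^ 2 = algebraMap F K ((b + 2) ^ 2 - 4 * a ^ 2) := by
  have hx := h.left_ne_zero
  have hy := h.right_ne_zero
  simp only [subInvProd, map_sub, map_add, map_mul, map_pow, map_ofNat, ← h.add_eq, ← h.mul_eq]
  field_simp
  ring

theorem left_ne_inv (h : IsReciprocalRootPair a b x y)
    (hN : (b + 2) ^ 2 - 4 * a ^ 2 ≠ 0) : x ≠ x⁻¹ :=
  sub_ne_zero.mp <| left_ne_zero_of_mul <| ne_zero_of_sq_eq_algebraMap hN h.sq_subInvProd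

theorem right_ne_inv (h : IsReciprocalRootPair a b x y)
    (hN : (b + 2) ^ 2 - 4 * a ^ 2 ≠ 0) : y ≠ y⁻¹ :=
  sub_ne_zero.mp <| right_ne_zero_of_mul <| ne_zero_of_sq_eq_algebraMap hN h.sq_subInvProd

theorem subInvProd_ne_neg (h : IsReciprocalRootPair a b x y) (h2 : (2 : K) ≠ 0)
    (hN : (b + 2) ^ 2 - 4 * a ^ 2 ≠ 0) : subInvProd x y ≠ -subInvProd x y := by
  have hε := ne_zero_of_sq_eq_algebraMap hN h.sq_subInvProd
  exact fun heq ↦ mul_ne_zero h2 hε (by linear_combination heq)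

theorem apply_add_inv_add_apply_add_inv (h : IsReciprocalRootPair a b x y) (σ : K ≃ₐ[F] K) :
    (σ x + (σ x)⁻¹) + (σ y + (σ y)⁻¹) = (x + x⁻¹) + (y + y⁻¹) := by
  rw [h.add_eq, ← σ.commutes, ← h.add_eq]
  simp only [map_add, map_inv₀]

theorem apply_right_eq_or_inv_of_apply_left_eq (h : IsReciprocalRootPair a b x y) {σ : K ≃ₐ[F] K}
    (hσx : σ x = x) : σ y = y ∨ σ y = y⁻¹ := by
  have hadd := h.apply_add_inv_add_apply_add_inv σ
  rw [hσx, add_right_inj] at hadd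
  exact (add_inv_eq_add_inv_iff (by simpa using h.right_ne_zero) h.right_ne_zero).mp hadd

theorem apply_eq_or_inv_of_traceDiff_fixed (h : IsReciprocalRootPair a b x y) (h2 : (2 : K) ≠ 0)
    {σ : K ≃ₐ[F] K} (hσ : σ (traceDiff x y) = traceDiff x y) :
    (σ x = x ∨ σ x = x⁻¹) ∧ (σ y = y ∨ σ y = y⁻¹) := by
  have hx := h.left_ne_zero
  have hy := h.right_ne_zero
  have hadd := h.apply_add_inv_add_apply_add_inv σ
  simp only [traceDiff, map_sub, map_add, map_inv₀] at hσ
  rw [← add_inv_eq_add_inv_iff (by simpa using hx) hx,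
    ← add_inv_eq_add_inv_iff (by simpa using hy) hy, ← mul_right_inj' h2,
    ← mul_right_inj' (b := σ y + (σ y)⁻¹) h2]
  exact ⟨by linear_combination hadd + hσ, by linear_combination hadd - hσ⟩

theorem apply_eq_or_inv_of_traceDiff_negated (h : IsReciprocalRootPair a b x y) (h2 : (2 : K) ≠ 0)
    {σ : K ≃ₐ[F] K} (hσ : σ (traceDiff x y) = -traceDiff x y) :
    (σ x = y ∨ σ x = y⁻¹) ∧ (σ y = x ∨ σ y = x⁻¹) := by
  have hx := h.left_ne_zero
  have hy := h.right_ne_zero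
  have hadd := h.apply_add_inv_add_apply_add_inv σ
  simp only [traceDiff, map_sub, map_add, map_inv₀] at hσ
  rw [← add_inv_eq_add_inv_iff (by simpa using hx) hy,
    ← add_inv_eq_add_inv_iff (by simpa using hy) hx, ← mul_right_inj' h2,
    ← mul_right_inj' (b := σ y + (σ y)⁻¹) h2]
  exact ⟨by linear_combination hadd + hσ, by linear_combination hadd - hσ⟩

theorem exists_rotation [Normal F K] (h : IsReciprocalRootPair a b x y)
    (hD : ¬IsSquare (a ^ 2 - 4 * (b - 2))) (hN : ¬IsSquare ((b + 2) ^ 2 - 4 * a ^ 2))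
    (hDN : ¬IsSquare ((a ^ 2 - 4 * (b - 2)) * ((b + 2) ^ 2 - 4 * a ^ 2))) :
    ∃ ρ : K ≃ₐ[F] K, ρ x = y ∧ ρ y = x⁻¹ := by
  obtain ⟨ρ, hδ, hε⟩ :=
    exists_algEquiv_apply_eq_neg_and_eq_neg hD hN hDN h.sq_traceDiff h.sq_subInvProd
  have h2 := two_ne_zero_of_not_isSquare_sq_sub_four_mul K hN
  have hne := h.subInvProd_ne_neg h2 (ne_zero_of_not_isSquare hN)
  simp only [subInvProd, map_mul, map_sub, map_inv₀] at hε hne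
  obtain ⟨hx | hx, hy | hy⟩ := h.apply_eq_or_inv_of_traceDiff_negated h2 hδ <;>
    simp only [hx, hy, inv_inv] at hε
  · exact absurd (by linear_combination hε) hne
  · exact ⟨ρ, hx, hy⟩
  · exact ⟨ρ.symm, by rw [AlgEquiv.symm_apply_eq, hy],
      by rw [AlgEquiv.symm_apply_eq, map_inv₀, hx, inv_inv]⟩
  · exact absurd (by linear_combination hε) hne

theorem exists_reflection [Normal F K] (h : IsReciprocalRootPair a b x y)
    (hD : ¬IsSquare (a ^ 2 - 4 * (b - 2))) (hN : ¬IsSquare ((b + 2) ^ 2 - 4 * a ^ 2))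
    (hDN : ¬IsSquare ((a ^ 2 - 4 * (b - 2)) * ((b + 2) ^ 2 - 4 * a ^ 2))) :
    ∃ τ : K ≃ₐ[F] K, τ x = x ∧ τ y = y⁻¹ := by
  obtain ⟨τ, hδ, hε⟩ :=
    exists_algEquiv_apply_eq_self_and_eq_neg hN hDN h.sq_traceDiff h.sq_subInvProd
  have h2 := two_ne_zero_of_not_isSquare_sq_sub_four_mul K hN
  have hne := h.subInvProd_ne_neg h2 (ne_zero_of_not_isSquare hN)
  simp only [subInvProd, map_mul, map_sub, map_inv₀] at hε hne
  obtain ⟨hx | hx, hy | hy⟩ := h.apply_eq_or_inv_of_traceDiff_fixed h2 hδ <;>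
    simp only [hx, hy, inv_inv] at hε
  · exact absurd hε hne
  · exact ⟨τ, hx, hy⟩
  · obtain ⟨ρ, hρx, hρy⟩ := h.exists_rotation hD hN hDN
    exact ⟨τ * ρ ^ 2, by simp [sq, hρx, hρy, hx], by simp [sq, hρx, hρy, hy]⟩
  · exact absurd (by linear_combination hε) hne

theorem algEquiv_ext [IsSplittingField F K (palindromicQuartic a b)]
    (h : IsReciprocalRootPair a b x y) {σ τ : K ≃ₐ[F] K} (hx : σ x = τ x) (hy : σ y = τ y) :
    σ = τ := by
  have hroots : Set.EqOn σ.toAlgHom τ.toAlgHom ((palindromicQuartic a b).rootSet K) := by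
    intro z hz
    obtain (rfl | rfl) | rfl | rfl :=
      h.aeval_palindromicQuartic_eq_zero_iff.mp (mem_rootSet.mp hz).2 <;>
      simp [hx, hy]
  have hadjoin := IsSplittingField.adjoin_rootSet K (palindromicQuartic a b)
  exact AlgEquiv.coe_toAlgHom_injective (AlgHom.ext_of_adjoin_eq_top hadjoin hroots)

theorem exists_zpow_apply_apply_left_eq (h : IsReciprocalRootPair a b x y) {ρ : K ≃ₐ[F] K}
    (hρx : ρ x = y) (hρy : ρ y = x⁻¹) (σ : K ≃ₐ[F] K) : ∃ k : ℤ, (ρ ^ k) (σ x) = x := by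
  have hroot : aeval (σ x) (palindromicQuartic a b) = 0 := by
    rw [aeval_algHom_apply, h.aeval_palindromicQuartic_eq_zero_iff.mpr (.inl (.inl rfl)), map_zero]
  obtain (hσ | hσ) | hσ | hσ := h.aeval_palindromicQuartic_eq_zero_iff.mp hroot
  · exact ⟨0, by simp [hσ]⟩
  · exact ⟨2, by simp [hσ, zpow_ofNat, pow_succ, hρx, hρy]⟩
  · exact ⟨3, by simp [hσ, zpow_ofNat, pow_succ, hρx, hρy]⟩
  · exact ⟨1, by simp [hσ, hρy]⟩

theorem orderOf_rotation [IsSplittingField F K (palindromicQuartic a b)]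
    (h : IsReciprocalRootPair a b x y) (hN : (b + 2) ^ 2 - 4 * a ^ 2 ≠ 0) {ρ : K ≃ₐ[F] K}
    (hρx : ρ x = y) (hρy : ρ y = x⁻¹) : orderOf ρ = 4 := by
  refine orderOf_eq_prime_pow (p := 2) (n := 1) (fun hρ2 ↦ h.left_ne_inv hN ?_) ?_
  · simpa [sq, hρx, hρy] using (DFunLike.congr_fun hρ2 x).symm
  · apply h.algEquiv_ext <;> simp [pow_succ, hρx, hρy]

theorem nonempty_algEquiv_mulEquiv_dihedralGroup [IsSplittingField F K (palindromicQuartic a b)]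
    (h : IsReciprocalRootPair a b x y)
    (hD : ¬IsSquare (a ^ 2 - 4 * (b - 2))) (hN : ¬IsSquare ((b + 2) ^ 2 - 4 * a ^ 2))
    (hDN : ¬IsSquare ((a ^ 2 - 4 * (b - 2)) * ((b + 2) ^ 2 - 4 * a ^ 2))) :
    Nonempty ((K ≃ₐ[F] K) ≃* DihedralGroup 4) := by
  have : Normal F K := .of_isSplittingField (palindromicQuartic a b)
  obtain ⟨ρ, hρx, hρy⟩ := h.exists_rotation hD hN hDN
  obtain ⟨τ, hτx, hτy⟩ := h.exists_reflection hD hN hDN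
  have hN0 := ne_zero_of_not_isSquare hN
  have hρ := h.orderOf_rotation hN0 hρx hρy
  refine nonempty_mulEquiv_dihedralGroup (τ := τ) hρ ?_ ?_ ?_ fun σ ↦ ?_
  · apply h.algEquiv_ext <;> simp [hτx, hτy]
  · have hρx' : ρ⁻¹ x = y⁻¹ := by
      rw [AlgEquiv.aut_inv, AlgEquiv.symm_apply_eq, map_inv₀, hρy, inv_inv]
    have hρy' : ρ⁻¹ y = x := by rw [AlgEquiv.aut_inv, AlgEquiv.symm_apply_eq, hρx]
    apply h.algEquiv_ext <;>
      simp only [AlgEquiv.mul_apply, map_inv₀, hρx, hρy, hρx', hρy', hτx, hτy, inv_inv]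
  · rintro ⟨k, rfl⟩
    have hcomm := DFunLike.congr_fun ((Commute.refl ρ).zpow_left k).eq x
    rw [AlgEquiv.mul_apply, AlgEquiv.mul_apply, hτx, hρx, hτy] at hcomm
    exact h.right_ne_inv hN0 hcomm.symm
  · obtain ⟨k, hkx⟩ := h.exists_zpow_apply_apply_left_eq hρx hρy σ
    refine ⟨k, (h.apply_right_eq_or_inv_of_apply_left_eq (σ := ρ ^ k * σ) hkx).imp ?_ ?_⟩ <;>
      intro hky
    · exact h.algEquiv_ext hkx hky
    · exact h.algEquiv_ext (hkx.trans hτx.symm) (hky.trans hτy.symm)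

end IsReciprocalRootPair

theorem nonempty_gal_palindromicQuartic_mulEquiv_dihedralGroup
    (hD : ¬IsSquare (a ^ 2 - 4 * (b - 2))) (hN : ¬IsSquare ((b + 2) ^ 2 - 4 * a ^ 2))
    (hDN : ¬IsSquare ((a ^ 2 - 4 * (b - 2)) * ((b + 2) ^ 2 - 4 * a ^ 2))) :
    Nonempty ((palindromicQuartic a b).Gal ≃* DihedralGroup 4) :=
  have ⟨_, _, h⟩ := exists_isReciprocalRootPair (SplittingField.splits (palindromicQuartic a b))
  h.nonempty_algEquiv_mulEquiv_dihedralGroup hD hN hDN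

end PalindromicQuartic

/-- The Galois group over `ℚ` of the quartic
`Z⁴ − (14/19)Z³ + (34/19)Z² − (14/19)Z + 1` (the nontrivial factor `χ^tr_19` of the
characteristic polynomial of Frobenius in the proof of Example 6.2/1.6 of the paper)
is the dihedral group `D₄` of order 8. -/
theorem gal_chi_tr_19_eq_D4 :
    Nonempty
      ((X ^ 4 - C (14 / 19 : ℚ) * X ^ 3 + C (34 / 19 : ℚ) * X ^ 2 - C (14 / 19 : ℚ) * X + 1 :
        ℚ[X]).Gal ≃* DihedralGroup 4) := by
  have hD : ¬IsSquare ((14 / 19) ^ 2 - 4 * (34 / 19 - 2) : ℚ) := by norm_num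
  have hN : ¬IsSquare ((34 / 19 + 2) ^ 2 - 4 * (14 / 19) ^ 2 : ℚ) := by norm_num
  have hDN : ¬IsSquare (((14 / 19) ^ 2 - 4 * (34 / 19 - 2)) *
      ((34 / 19 + 2) ^ 2 - 4 * (14 / 19) ^ 2) : ℚ) := by norm_num
  exact nonempty_gal_palindromicQuartic_mulEquiv_dihedralGroup hD hN hDN
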